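/- Let H be a 2-edge-connected undirected graph with a DFS tree T rooted at r, and let u and v be vertices different from r such that v is an ancestor of u. Then {(u,p(u)),(v,p(v))} is a cut-pair of H if and only if v is a proper ancestor of u, M(u) = M(v), and high(u) is a proper ancestor of v. -/

import Mathlib

/-- A DFS tree of the graph `H`, rooted at `r`, given by a parent function:
it is a spanning tree (every vertex reaches the root by iterating the parent
function, and each non-root vertex is adjacent to its parent), and every edge
of `H` joins a vertex to one of its ancestors. -/
structure DFSTree {V : Type*} (H : SimpleGraph V) (r : V) where
  par : V → V
  par_root : par r = r
  reaches_root : ∀ v : V, ∃ n : ℕ, par^[n] v = r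
  par_adj : ∀ v : V, v ≠ r → H.Adj v (par v)
  edge_anc : ∀ x y : V, H.Adj x y → (∃ n : ℕ, par^[n] x = y) ∨ (∃ n : ℕ, par^[n] y = x)

namespace DFSTree

variable {V : Type*} {H : SimpleGraph V} {r : V} (T : DFSTree H r)

/-- `a` is an ancestor of `b` (every vertex is an ancestor of itself). -/
def Anc (a b : V) : Prop := ∃ n : ℕ, T.par^[n] b = a

/-- `a` is a proper ancestor of `b`. -/
def PAnc (a b : V) : Prop := T.Anc a b ∧ a ≠ b

/-- `(x,y)` is a back-edge: an edge of `H` from `x` to an ancestor `y` of `x`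
which is not the tree edge from `x` to its parent. -/
def BackEdge (x y : V) : Prop := H.Adj x y ∧ T.Anc y x ∧ T.par x ≠ y

/-- The set of descendants of `v` joined by a back-edge to a proper ancestor of `v`. -/
def MSet (v : V) : Set V := {x | T.Anc v x ∧ ∃ y, T.PAnc y v ∧ T.BackEdge x y}

/-- `m = M(v)`: `m` is the nearest common ancestor of all descendants of `v`
joined by a back-edge to a proper ancestor of `v`. -/
def IsM (v m : V) : Prop :=
  (∀ x ∈ T.MSet v, T.Anc m x) ∧ ∀ m' : V, (∀ x ∈ T.MSet v, T.Anc m' x) → T.Anc m' m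

/-- The set of descendants of `v` joined by a back-edge to a proper ancestor of `p(v)`. -/
def MpSet (v : V) : Set V := {x | T.Anc v x ∧ ∃ y, T.PAnc y (T.par v) ∧ T.BackEdge x y}

/-- `m = M_p(v)`: `m` is the nearest common ancestor of all descendants of `v`
joined by a back-edge to a proper ancestor of `p(v)`. -/
def IsMp (v m : V) : Prop :=
  (∀ x ∈ T.MpSet v, T.Anc m x) ∧ ∀ m' : V, (∀ x ∈ T.MpSet v, T.Anc m' x) → T.Anc m' m

/-- `h = high(v)`: `h` is the deepest proper ancestor of `v` joined by a
back-edge to a descendant of `v`. -/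
def IsHigh (v h : V) : Prop :=
  T.PAnc h v ∧ (∃ x, T.Anc v x ∧ T.BackEdge x h) ∧
    ∀ h' : V, T.PAnc h' v → (∃ x, T.Anc v x ∧ T.BackEdge x h') → T.Anc h' h

/-- `h = high_p(v)`: `h` is the deepest proper ancestor of `p(v)` joined by a
back-edge to a descendant of `v`. -/
def IsHighP (v h : V) : Prop :=
  T.PAnc h (T.par v) ∧ (∃ x, T.Anc v x ∧ T.BackEdge x h) ∧
    ∀ h' : V, T.PAnc h' (T.par v) → (∃ x, T.Anc v x ∧ T.BackEdge x h') → T.Anc h' h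

/-- `l = low(v)`: `l` is the proper ancestor of `v` nearest to the root joined
by a back-edge to a descendant of `v`. -/
def IsLow (v l : V) : Prop :=
  T.PAnc l v ∧ (∃ x, T.Anc v x ∧ T.BackEdge x l) ∧
    ∀ l' : V, T.PAnc l' v → (∃ x, T.Anc v x ∧ T.BackEdge x l') → T.Anc l l'

end DFSTree

/-- `{v, e}` is a vertex-edge cut-pair of `H`: `e` is an edge of `H` and deleting
both `v` (with its incident edges) and `e` disconnects `H`. -/
def VECutPair {V : Type*} (H : SimpleGraph V) (v : V) (e : Sym2 V) : Prop :=
  e ∈ H.edgeSet ∧ ¬ ((H.deleteEdges {e}).induce {u | u ≠ v}).Connected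

/-- `{e, e'}` is a cut-pair of `H`: `e` and `e'` are distinct edges of `H` whose
deletion disconnects `H`. -/
def ECutPair {V : Type*} (H : SimpleGraph V) (e e' : Sym2 V) : Prop :=
  e ∈ H.edgeSet ∧ e' ∈ H.edgeSet ∧ e ≠ e' ∧ ¬ (H.deleteEdges {e, e'}).Connected

/-- An undirected graph is 2-edge-connected if it is connected and has no bridge. -/
def TwoEdgeConnected {W : Type*} (G : SimpleGraph W) : Prop :=
  G.Connected ∧ ∀ e ∈ G.edgeSet, ¬ G.IsBridge e

/-- An undirected graph is 2-vertex-connected if it has at least three vertices,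
is connected, and deleting any single vertex leaves it connected. -/
def TwoVertexConnected {W : Type*} (G : SimpleGraph W) : Prop :=
  3 ≤ Nat.card W ∧ G.Connected ∧ ∀ v : W, (G.induce {u | u ≠ v}).Connected


/-!
Write `B(w)` for the set of back-edges joining a descendant of `w` to a proper ancestor of `w`.
Deleting the tree edges above `u` and above `v` splits the tree into three connected pieces:
the subtree of `u`, the part of the subtree of `v` outside it, and the rest. Back-edges of
`B(u) \ B(v)` join the first piece to the second, those of `B(v) \ B(u)` the second to the third,
and those of `B(u) ∩ B(v)` the first to the third. When neither tree edge is a bridge, both `B(u)`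
and `B(v)` are nonempty, so the pieces stay connected unless the middle one is isolated, that is,
unless `B(u) = B(v)`. This equality is what `M(u) = M(v)` and `high(u)` detect: the lower ends of
`B(v)` lie below `u`, and the upper ends of `B(u)` lie above `v`.
-/

namespace DFSTree

variable {V : Type*} {H : SimpleGraph V} {r : V} (T : DFSTree H r)

section Ancestors

lemma anc_refl (a : V) : T.Anc a a := ⟨0, rfl⟩

lemma anc_root (a : V) : T.Anc r a := T.reaches_root a

lemma par_anc (a : V) : T.Anc (T.par a) a := ⟨1, rfl⟩

variable {T} {a b c x : V}

lemma Anc.trans (hab : T.Anc a b) (hbc : T.Anc b c) : T.Anc a c := by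
  obtain ⟨n, rfl⟩ := hab
  obtain ⟨m, rfl⟩ := hbc
  exact ⟨n + m, Function.iterate_add_apply _ _ _ _⟩

lemma eq_root_of_isPeriodicPt {n : ℕ} (hn : 0 < n) (ha : Function.IsPeriodicPt T.par n a) :
    a = r := by
  obtain ⟨k, hk⟩ := T.reaches_root a
  have hr : Function.IsFixedPt T.par r := T.par_root
  exact (ha.iterate k).eq_of_apply_eq_same ((hr.isPeriodicPt n).iterate k) hn
    (hk.trans (hr.iterate k).symm)

lemma Anc.eq_root (h : T.Anc a r) : a = r := by
  obtain ⟨n, rfl⟩ := h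
  exact Function.iterate_fixed T.par_root n

lemma Anc.antisymm (hab : T.Anc a b) (hba : T.Anc b a) : a = b := by
  obtain ⟨n, hn⟩ := id hab
  obtain ⟨m, hm⟩ := hba
  rcases Nat.eq_zero_or_pos n with rfl | hpos
  · exact hn.symm
  have hperiodic : T.par^[m + n] b = b := by rw [Function.iterate_add_apply, hn, hm]
  obtain rfl := eq_root_of_isPeriodicPt (Nat.add_pos_right m hpos) hperiodic
  exact hab.eq_root

lemma Anc.total (ha : T.Anc a x) (hb : T.Anc b x) : T.Anc a b ∨ T.Anc b a := by
  obtain ⟨n, rfl⟩ := ha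
  obtain ⟨m, rfl⟩ := hb
  rcases le_total m n with h | h
  · exact .inl ⟨n - m, by rw [← Function.iterate_add_apply, Nat.sub_add_cancel h]⟩
  · exact .inr ⟨m - n, by rw [← Function.iterate_add_apply, Nat.sub_add_cancel h]⟩

lemma PAnc.anc_par (h : T.PAnc a x) : T.Anc a (T.par x) := by
  obtain ⟨⟨n, rfl⟩, hne⟩ := h
  cases n with
  | zero => exact absurd rfl hne
  | succ n => exact ⟨n, rfl⟩

lemma PAnc.not_anc (h : T.PAnc a b) : ¬ T.Anc b a := fun hba ↦ h.2 (h.1.antisymm hba)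

lemma PAnc.trans_anc (hab : T.PAnc a b) (hbc : T.Anc b c) : T.PAnc a c :=
  ⟨hab.1.trans hbc, by rintro rfl; exact hab.not_anc hbc⟩

lemma Anc.trans_pAnc (hab : T.Anc a b) (hbc : T.PAnc b c) : T.PAnc a c :=
  ⟨hab.trans hbc.1, by rintro rfl; exact hbc.not_anc hab⟩

lemma pAnc_iff_not_anc (ha : T.Anc a x) (hb : T.Anc b x) : T.PAnc a b ↔ ¬ T.Anc b a := by
  refine ⟨PAnc.not_anc, fun h ↦ ⟨(ha.total hb).resolve_right h, ?_⟩⟩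
  rintro rfl
  exact h (T.anc_refl _)

lemma par_pAnc (ha : a ≠ r) : T.PAnc (T.par a) a := ⟨T.par_anc a, (T.par_adj a ha).ne'⟩

lemma IsM.unique {v m m' : V} (h : T.IsM v m) (h' : T.IsM v m') : m = m' :=
  (h'.2 _ h.1).antisymm (h.2 _ h'.1)

lemma IsM.anc {v m : V} (h : T.IsM v m) : T.Anc v m := h.2 v fun _ hx ↦ hx.1

end Ancestors

section DeleteParEdges

/-- The tree edge joining `w` to its parent; at the root this is the loop `s(r, r)`, which is not
an edge of `H`. -/
def parEdge (w : V) : Sym2 V := s(w, T.par w)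

/-- The graph `H` without the tree edges joining the vertices of `D` to their parents. -/
def deleteParEdges (D : Set V) : SimpleGraph V := H.deleteEdges (T.parEdge '' D)

variable {T} {D : Set V} {a w x y : V}

lemma parEdge_injective : Function.Injective T.parEdge := by
  intro x w h
  rcases Sym2.eq_iff.1 h with ⟨hxw, -⟩ | ⟨hx, hw⟩
  · exact hxw
  · exact Anc.antisymm (hx ▸ T.par_anc w) (hw ▸ T.par_anc x)

lemma BackEdge.ne_parEdge (h : T.BackEdge x y) (w : V) : s(x, y) ≠ T.parEdge w := by
  intro he
  rcases Sym2.eq_iff.1 he with ⟨rfl, hy⟩ | ⟨hx, rfl⟩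
  · exact h.2.2 hy.symm
  · exact h.1.ne (Anc.antisymm (hx ▸ T.par_anc y) h.2.1)

lemma BackEdge.deleteParEdges_adj (h : T.BackEdge x y) : (T.deleteParEdges D).Adj x y :=
  SimpleGraph.deleteEdges_adj.2 ⟨h.1, fun ⟨w, _, hw⟩ ↦ h.ne_parEdge w hw.symm⟩

lemma deleteParEdges_adj_par (hx : x ≠ r) (hxD : x ∉ D) :
    (T.deleteParEdges D).Adj x (T.par x) :=
  SimpleGraph.deleteEdges_adj.2 ⟨T.par_adj x hx, mt parEdge_injective.mem_set_image.1 hxD⟩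

lemma backEdge_of_deleteParEdges_adj (hw : w ∈ D) (hxy : (T.deleteParEdges D).Adj x y)
    (hx : T.Anc w x) (hy : ¬ T.Anc w y) : T.BackEdge x y := by
  obtain ⟨hadj, hnot⟩ := SimpleGraph.deleteEdges_adj.1 hxy
  refine ⟨hadj, (T.edge_anc x y hadj).resolve_right fun h ↦ hy (hx.trans h), ?_⟩
  rintro rfl
  obtain rfl : w = x := by
    by_contra hne
    exact hy (PAnc.anc_par ⟨hx, hne⟩)
  exact hnot (Set.mem_image_of_mem _ hw)

lemma deleteParEdges_reachable_of_anc (hax : T.Anc a x)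
    (hD : ∀ w ∈ D, T.Anc w x → T.Anc w a) : (T.deleteParEdges D).Reachable x a := by
  obtain ⟨n, hn⟩ := id hax
  induction n generalizing x with
  | zero => rw [← hn]; rfl
  | succ n ih =>
    by_cases hne : a = x
    · rw [hne]
    have hpax : T.PAnc a x := ⟨hax, hne⟩
    have hxr : x ≠ r := by rintro rfl; exact hne hax.eq_root
    have hxD : x ∉ D := fun hx ↦ hpax.not_anc (hD x hx (T.anc_refl x))
    exact (deleteParEdges_adj_par hxr hxD).reachable.trans
      (ih hpax.anc_par (fun w hw h ↦ hD w hw (h.trans (T.par_anc x))) hn)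

lemma deleteParEdges_connected (hD : ∀ w ∈ D, (T.deleteParEdges D).Reachable w r) :
    (T.deleteParEdges D).Connected := by
  refine (SimpleGraph.connected_iff_exists_forall_reachable _).2 ⟨r, fun x ↦ .symm ?_⟩
  obtain ⟨n, hn⟩ := T.reaches_root x
  induction n generalizing x with
  | zero => rw [show x = r from hn]
  | succ n ih =>
    by_cases hxr : x = r
    · rw [hxr]
    by_cases hxD : x ∈ D
    · exact hD x hxD
    · exact (deleteParEdges_adj_par hxr hxD).reachable.trans (ih _ hn)

end DeleteParEdges

section BackEdgesOver

/-- The set `B(w)` of back-edges `(x, y)` joining a descendant `x` of `w` to a proper ancestor `y`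
of `w`. -/
def backEdgesOver (w : V) : Set (V × V) :=
  {e | T.BackEdge e.1 e.2 ∧ T.Anc w e.1 ∧ T.PAnc e.2 w}

variable {T} {u v w x y hg : V}

lemma mem_backEdgesOver_iff :
    (x, y) ∈ T.backEdgesOver w ↔ T.BackEdge x y ∧ T.Anc w x ∧ ¬ T.Anc w y := by
  refine and_congr_right fun hb ↦ and_congr_right fun hx ↦ ?_
  exact pAnc_iff_not_anc hb.2.1 hx

lemma mSet_eq_image_backEdgesOver : T.MSet w = Prod.fst '' T.backEdgesOver w := by
  ext x
  constructor
  · rintro ⟨hx, y, hy, hb⟩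
    exact ⟨(x, y), ⟨hb, hx, hy⟩, rfl⟩
  · rintro ⟨⟨x, y⟩, ⟨hb, hx, hy⟩, rfl⟩
    exact ⟨hx, y, hy, hb⟩

lemma IsHigh.exists_mem_backEdgesOver (hh : T.IsHigh w hg) : ∃ x, (x, hg) ∈ T.backEdgesOver w := by
  obtain ⟨hhw, ⟨x, hx, hb⟩, -⟩ := hh
  exact ⟨x, hb, hx, hhw⟩

lemma backEdgesOver_nonempty (hw : w ≠ r) (hbridge : ¬ H.IsBridge s(w, T.par w)) :
    (T.backEdgesOver w).Nonempty := by
  have hreach : (T.deleteParEdges {w}).Reachable w (T.par w) := by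
    rw [deleteParEdges, Set.image_singleton]
    exact not_not.1 (mt SimpleGraph.isBridge_iff.2 hbridge)
  obtain ⟨p⟩ := hreach
  obtain ⟨⟨⟨x, y⟩, hxy⟩, -, hx, hy⟩ :=
    p.exists_boundary_dart {x | T.Anc w x} (T.anc_refl w) (par_pAnc hw).not_anc
  have hb : T.BackEdge x y := backEdge_of_deleteParEdges_adj (Set.mem_singleton w) hxy hx hy
  exact ⟨(x, y), mem_backEdgesOver_iff.2 ⟨hb, hx, hy⟩⟩

lemma backEdgesOver_eq_iff {mu mv : V} (hvu : T.Anc v u) (hmu : T.IsM u mu) (hmv : T.IsM v mv)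
    (hh : T.IsHigh u hg) : T.backEdgesOver u = T.backEdgesOver v ↔ mu = mv ∧ T.PAnc hg v := by
  constructor
  · intro heq
    have hM : T.MSet u = T.MSet v := by simp only [mSet_eq_image_backEdgesOver, heq]
    obtain ⟨x, hx⟩ := hh.exists_mem_backEdgesOver
    rw [heq] at hx
    refine ⟨hmu.unique ?_, hx.2.2⟩
    simpa only [IsM, hM] using hmv
  · rintro ⟨rfl, hhv⟩
    ext ⟨x, y⟩
    constructor
    · rintro ⟨hb, hx, hy⟩
      exact ⟨hb, hvu.trans hx, (hh.2.2 y hy ⟨x, hx, hb⟩).trans_pAnc hhv⟩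
    · rintro ⟨hb, hx, hy⟩
      exact ⟨hb, hmu.anc.trans (hmv.1 x ⟨hx, y, hy, hb⟩), hy.trans_anc hvu⟩

end BackEdgesOver

section CutPair

variable {T} {u v x : V} {e : V × V}

lemma deleteParEdges_pair_reachable_lower (hvu : T.Anc v u) (hx : T.Anc u x) :
    (T.deleteParEdges {u, v}).Reachable x u := by
  refine deleteParEdges_reachable_of_anc hx ?_
  rintro w (rfl | rfl) -
  · exact T.anc_refl w
  · exact hvu

lemma deleteParEdges_pair_reachable_upper (hvx : T.Anc v x) (hux : ¬ T.Anc u x) :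
    (T.deleteParEdges {u, v}).Reachable x v := by
  refine deleteParEdges_reachable_of_anc hvx ?_
  rintro w (rfl | rfl) hw
  · exact absurd hw hux
  · exact T.anc_refl w

lemma deleteParEdges_pair_reachable_root (hvu : T.Anc v u) (hx : ¬ T.Anc v x) :
    (T.deleteParEdges {u, v}).Reachable x r := by
  refine deleteParEdges_reachable_of_anc (T.anc_root x) ?_
  rintro w (rfl | rfl) hw
  · exact absurd (hvu.trans hw) hx
  · exact absurd hw hx

lemma deleteParEdges_pair_connected (hu : (T.deleteParEdges {u, v}).Reachable u r)
    (hv : (T.deleteParEdges {u, v}).Reachable v r) : (T.deleteParEdges {u, v}).Connected := by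
  refine deleteParEdges_connected ?_
  rintro w (rfl | rfl)
  · exact hu
  · exact hv

lemma deleteParEdges_pair_connected_of_mem_lower_diff (hvu : T.Anc v u)
    (hv : (T.backEdgesOver v).Nonempty) (he : e ∈ T.backEdgesOver u \ T.backEdgesOver v) :
    (T.deleteParEdges {u, v}).Connected := by
  obtain ⟨⟨hb, hux, hyu⟩, hev⟩ := he
  have hvy : T.Anc v e.2 := by
    by_contra hvy
    exact hev (mem_backEdgesOver_iff.2 ⟨hb, hvu.trans hux, hvy⟩)
  have huv : (T.deleteParEdges {u, v}).Reachable u v :=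
    (deleteParEdges_pair_reachable_lower hvu hux).symm.trans <|
      hb.deleteParEdges_adj.reachable.trans <|
        deleteParEdges_pair_reachable_upper hvy hyu.not_anc
  obtain ⟨⟨a, b⟩, hab, hva, hbv⟩ := hv
  have hav : (T.deleteParEdges {u, v}).Reachable a v := by
    by_cases hua : T.Anc u a
    · exact (deleteParEdges_pair_reachable_lower hvu hua).trans huv
    · exact deleteParEdges_pair_reachable_upper hva hua
  have hvr : (T.deleteParEdges {u, v}).Reachable v r :=
    hav.symm.trans <| hab.deleteParEdges_adj.reachable.trans <|
      deleteParEdges_pair_reachable_root hvu hbv.not_anc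
  exact deleteParEdges_pair_connected (huv.trans hvr) hvr

lemma deleteParEdges_pair_connected_of_mem_upper_diff (hvu : T.Anc v u)
    (hu : (T.backEdgesOver u).Nonempty) (he : e ∈ T.backEdgesOver v \ T.backEdgesOver u) :
    (T.deleteParEdges {u, v}).Connected := by
  obtain ⟨⟨hb, hvx, hyv⟩, heu⟩ := he
  have hux : ¬ T.Anc u e.1 := fun hux ↦ heu ⟨hb, hux, hyv.trans_anc hvu⟩
  have hvr : (T.deleteParEdges {u, v}).Reachable v r :=
    (deleteParEdges_pair_reachable_upper hvx hux).symm.trans <|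
      hb.deleteParEdges_adj.reachable.trans <|
        deleteParEdges_pair_reachable_root hvu hyv.not_anc
  obtain ⟨⟨a, b⟩, hab, hua, hbu⟩ := hu
  have hbr : (T.deleteParEdges {u, v}).Reachable b r := by
    by_cases hvb : T.Anc v b
    · exact (deleteParEdges_pair_reachable_upper hvb hbu.not_anc).trans hvr
    · exact deleteParEdges_pair_reachable_root hvu hvb
  have hur : (T.deleteParEdges {u, v}).Reachable u r :=
    (deleteParEdges_pair_reachable_lower hvu hua).symm.trans <|
      hab.deleteParEdges_adj.reachable.trans hbr
  exact deleteParEdges_pair_connected hur hvr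

lemma not_deleteParEdges_pair_connected (hv : v ≠ r) (hvu : T.PAnc v u)
    (heq : T.backEdgesOver u = T.backEdgesOver v) : ¬ (T.deleteParEdges {u, v}).Connected := by
  intro hconn
  obtain ⟨p⟩ := hconn v r
  obtain ⟨⟨⟨x, y⟩, hxy⟩, -, ⟨hvx, hux⟩, hy⟩ :=
    p.exists_boundary_dart {x | T.Anc v x ∧ ¬ T.Anc u x} ⟨T.anc_refl v, hvu.not_anc⟩
      fun h ↦ hv h.1.eq_root
  by_cases hvy : T.Anc v y
  · have huy : T.Anc u y := not_not.1 fun huy ↦ hy ⟨hvy, huy⟩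
    have hyx : (y, x) ∈ T.backEdgesOver u := mem_backEdgesOver_iff.2
      ⟨backEdge_of_deleteParEdges_adj (.inl rfl) hxy.symm huy hux, huy, hux⟩
    rw [heq] at hyx
    exact hyx.2.2.not_anc hvx
  · have hxy : (x, y) ∈ T.backEdgesOver v := mem_backEdgesOver_iff.2
      ⟨backEdge_of_deleteParEdges_adj (.inr rfl) hxy hvx hvy, hvx, hvy⟩
    rw [← heq] at hxy
    exact hux hxy.2.1

lemma not_deleteParEdges_pair_connected_iff (hv : v ≠ r) (hvu : T.PAnc v u)
    (hBu : (T.backEdgesOver u).Nonempty) (hBv : (T.backEdgesOver v).Nonempty) :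
    ¬ (T.deleteParEdges {u, v}).Connected ↔ T.backEdgesOver u = T.backEdgesOver v := by
  refine ⟨fun hdisc ↦ ?_, not_deleteParEdges_pair_connected hv hvu⟩
  ext e
  constructor <;> intro he <;> by_contra he'
  · exact hdisc (deleteParEdges_pair_connected_of_mem_lower_diff hvu.1 hBv ⟨he, he'⟩)
  · exact hdisc (deleteParEdges_pair_connected_of_mem_upper_diff hvu.1 hBu ⟨he, he'⟩)

lemma eCutPair_parEdge_iff (hu : u ≠ r) (hv : v ≠ r) :
    ECutPair H (T.parEdge u) (T.parEdge v) ↔ u ≠ v ∧ ¬ (T.deleteParEdges {u, v}).Connected := by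
  have hmem {w : V} (hw : w ≠ r) : T.parEdge w ∈ H.edgeSet := T.par_adj w hw
  simp only [ECutPair, hmem hu, hmem hv, true_and, parEdge_injective.ne_iff, deleteParEdges,
    Set.image_pair]

end CutPair

end DFSTree

theorem stmt_17_general {V : Type*} {H : SimpleGraph V} {r : V} (T : DFSTree H r)
    {u v mu mv hgu : V} (hvr : v ≠ r) (hbridge : ¬ H.IsBridge s(v, T.par v)) (hanc : T.Anc v u)
    (hmu : T.IsM u mu) (hmv : T.IsM v mv) (hhgu : T.IsHigh u hgu) :
    ECutPair H s(u, T.par u) s(v, T.par v) ↔ T.PAnc v u ∧ mu = mv ∧ T.PAnc hgu v := by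
  have hur : u ≠ r := by rintro rfl; exact hvr hanc.eq_root
  have hBu : (T.backEdgesOver u).Nonempty := by
    obtain ⟨x, hx⟩ := hhgu.exists_mem_backEdgesOver
    exact ⟨(x, hgu), hx⟩
  have hBv : (T.backEdgesOver v).Nonempty := DFSTree.backEdgesOver_nonempty hvr hbridge
  calc
    ECutPair H s(u, T.par u) s(v, T.par v)
      ↔ u ≠ v ∧ ¬ (T.deleteParEdges {u, v}).Connected := DFSTree.eCutPair_parEdge_iff hur hvr
    _ ↔ T.PAnc v u ∧ ¬ (T.deleteParEdges {u, v}).Connected := by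
      rw [DFSTree.PAnc, and_iff_right hanc, ne_comm]
    _ ↔ T.PAnc v u ∧ T.backEdgesOver u = T.backEdgesOver v :=
      and_congr_right fun hvu ↦ DFSTree.not_deleteParEdges_pair_connected_iff hvr hvu hBu hBv
    _ ↔ T.PAnc v u ∧ mu = mv ∧ T.PAnc hgu v := by
      rw [DFSTree.backEdgesOver_eq_iff hanc hmu hmv hhgu]

theorem stmt_17 {V : Type*} [Fintype V] (H : SimpleGraph V) (r : V)
    (T : DFSTree H r) (hH : TwoEdgeConnected H) (u v mu mv hgu : V)
    (hur : u ≠ r) (hvr : v ≠ r) (hanc : T.Anc v u)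
    (hmu : T.IsM u mu) (hmv : T.IsM v mv) (hhgu : T.IsHigh u hgu) :
    ECutPair H s(u, T.par u) s(v, T.par v) ↔
      (T.PAnc v u ∧ mu = mv ∧ T.PAnc hgu v) :=
  stmt_17_general T hvr (hH.2 _ (T.par_adj v hvr)) hanc hmu hmv hhgu
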